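/- arXiv:1106.1354 — 4 statements merged into one kernel-verified Lean document; each statement's English description precedes it below -/
import Mathlib

section
/- Let q₂ be a quadratic form on ℝ³, let q₁, l₁ be linear forms on ℝ³, and let q₀, l₀, c₀ ∈ ℝ. Define G(ū,u₄) = q₂(ū) + q₁(ū)·u₄ + q₀u₄² + l₁(ū) + l₀u₄ + c₀ on ℝ⁴. Then for all x ∈ ℝ³ one has the identity (|x|²+1)² · G(σ⁻¹(x)) = (q₀+l₀+c₀)(|x|²)² + 2|x|²·(q₁(x)+l₁(x)) + 4q₂(x) + 2(c₀−q₀)|x|² + 2(l₁(x)−q₁(x)) + (q₀−l₀+c₀). In particular the stereographic projection of Σ ∩ {G=0} ∖ {Z} satisfies an equation of Darboux cyclide form; moreover the coefficients λ = q₀+l₀+c₀, the linear part, and the degree-≤2 part of the right-hand side all vanish if and only if G is a real scalar multiple of the polynomial u₁²+u₂²+u₃²+u₄²−1 defining Σ. -/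
/-- The inverse stereographic projection `σ⁻¹ : ℝ³ → ℝ⁴`. -/
noncomputable def invStereo (x : Fin 3 → ℝ) : Fin 4 → ℝ :=
  ![2 * x 0 / (x 0 ^ 2 + x 1 ^ 2 + x 2 ^ 2 + 1),
    2 * x 1 / (x 0 ^ 2 + x 1 ^ 2 + x 2 ^ 2 + 1),
    2 * x 2 / (x 0 ^ 2 + x 1 ^ 2 + x 2 ^ 2 + 1),
    (x 0 ^ 2 + x 1 ^ 2 + x 2 ^ 2 - 1) / (x 0 ^ 2 + x 1 ^ 2 + x 2 ^ 2 + 1)]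


/-
Let `Gʰ` be the homogenisation of `G` in one extra variable. Clearing the denominator of
`σ⁻¹(x) = (2x, |x|² - 1) / (|x|² + 1)` gives `Gʰ(2x, |x|² - 1, |x|² + 1)`, which expands to the
right-hand side of the identity. For the triviality criterion, a polynomial function of degree at
most two determines its graded parts when `2` is not a zero divisor, since replacing `x` by `-x`
separates the linear part from the rest. Comparing graded parts turns both sides of the equivalence
into the same conditions on the coefficients:
`q₂ = q₀ |·|²`, `q₁ = l₁ = 0`, `l₀ = 0` and `c₀ = -q₀`.
-/

section GradedParts

variable {K E : Type*} [CommRing K] [AddCommGroup E] [Module K E]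

/-- The function on `E × K` given by a polynomial of degree at most two. The parts are graded by
their degree in the `E`-coordinate `u`; `q` marks the terms of total degree two, `l` those of total
degree one and `c` the constant. -/
def prodQuadric (q₂ : QuadraticForm K E) (q₁ l₁ : Module.Dual K E) (q₀ l₀ c₀ : K) (p : E × K) : K :=
  q₂ p.1 + q₁ p.1 * p.2 + q₀ * p.2 ^ 2 + l₁ p.1 + l₀ * p.2 + c₀

variable [NoZeroDivisors K] [NeZero (2 : K)]

theorem forall_quadratic_add_linear_add_const_eq_zero_iff
    (Q : QuadraticForm K E) (l : Module.Dual K E) (c : K) :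
    (∀ x, Q x + l x + c = 0) ↔ Q = 0 ∧ l = 0 ∧ c = 0 := by
  refine ⟨fun h => ?_, by rintro ⟨rfl, rfl, rfl⟩; simp⟩
  have hc : c = 0 := by simpa using h 0
  have hl (x : E) : l x = 0 := by
    have hneg : Q x - l x + c = 0 := by simpa [sub_eq_add_neg] using h (-x)
    have htwo : 2 * l x = 0 := by linear_combination h x - hneg
    exact (mul_eq_zero.mp htwo).resolve_left two_ne_zero
  exact ⟨QuadraticMap.ext fun x => by simpa [hl, hc] using h x, LinearMap.ext hl, hc⟩

theorem forall_prodQuadric_eq_zero_iff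
    (q₂ : QuadraticForm K E) (q₁ l₁ : Module.Dual K E) (q₀ l₀ c₀ : K) :
    (∀ p, prodQuadric q₂ q₁ l₁ q₀ l₀ c₀ p = 0) ↔
      q₂ = 0 ∧ q₁ = 0 ∧ l₁ = 0 ∧ q₀ = 0 ∧ l₀ = 0 ∧ c₀ = 0 := by
  refine ⟨fun h => ?_, by rintro ⟨rfl, rfl, rfl, rfl, rfl, rfl⟩; simp [prodQuadric]⟩
  -- The restriction to each line `{u} × K` is itself a vanishing quadratic polynomial in `t`.
  have hline (u : E) : q₀ = 0 ∧ q₁ u + l₀ = 0 ∧ q₂ u + l₁ u + c₀ = 0 := by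
    obtain ⟨hquad, hlin, hconst⟩ := (forall_quadratic_add_linear_add_const_eq_zero_iff
      (q₀ • QuadraticMap.sq) ((q₁ u + l₀) • LinearMap.id) (q₂ u + l₁ u + c₀)).mp fun t => by
        have ht := h (u, t)
        simp only [prodQuadric] at ht
        simp only [smul_apply, QuadraticMap.sq_apply, LinearMap.smul_apply, LinearMap.id_apply,
          smul_eq_mul]
        linear_combination ht
    exact ⟨by simpa using DFunLike.congr_fun hquad 1, by simpa using DFunLike.congr_fun hlin 1,
      hconst⟩
  obtain ⟨-, hq₁, hl₀⟩ :=
    (forall_quadratic_add_linear_add_const_eq_zero_iff 0 q₁ l₀).mp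
      (by simpa using fun u => (hline u).2.1)
  obtain ⟨hq₂, hl₁, hc₀⟩ :=
    (forall_quadratic_add_linear_add_const_eq_zero_iff q₂ l₁ c₀).mp fun u => (hline u).2.2
  exact ⟨hq₂, hq₁, hl₁, (hline 0).1, hl₀, hc₀⟩

theorem forall_prodQuadric_eq_mul_iff
    (N q₂ : QuadraticForm K E) (q₁ l₁ : Module.Dual K E) (q₀ l₀ c₀ μ : K) :
    (∀ p, prodQuadric q₂ q₁ l₁ q₀ l₀ c₀ p = μ * (N p.1 + p.2 ^ 2 - 1)) ↔
      q₂ = μ • N ∧ q₁ = 0 ∧ l₁ = 0 ∧ q₀ = μ ∧ l₀ = 0 ∧ c₀ = -μ := by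
  have hsub (p : E × K) :
      prodQuadric q₂ q₁ l₁ q₀ l₀ c₀ p - μ * (N p.1 + p.2 ^ 2 - 1) =
        prodQuadric (q₂ - μ • N) q₁ l₁ (q₀ - μ) l₀ (c₀ + μ) p := by
    simp only [prodQuadric, sub_apply, smul_apply, smul_eq_mul]
    ring
  simp only [← sub_eq_zero (b := μ * _), hsub, forall_prodQuadric_eq_zero_iff,
    sub_eq_zero (b := μ), sub_eq_zero (b := μ • N), add_eq_zero_iff_eq_neg]

theorem cyclide_coefficients_eq_zero_iff
    (N q₂ : QuadraticForm K E) (q₁ l₁ : Module.Dual K E) (q₀ l₀ c₀ : K) :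
    (q₀ + l₀ + c₀ = 0 ∧ (∀ x, 2 * (q₁ x + l₁ x) = 0) ∧
      ∀ x, 4 * q₂ x + 2 * (c₀ - q₀) * N x + 2 * (l₁ x - q₁ x) + (q₀ - l₀ + c₀) = 0) ↔
      q₂ = q₀ • N ∧ q₁ = 0 ∧ l₁ = 0 ∧ l₀ = 0 ∧ c₀ = -q₀ := by
  have two_cancel {a : K} (h : 2 * a = 0) : a = 0 := (mul_eq_zero.mp h).resolve_left two_ne_zero
  constructor
  · rintro ⟨hlead, hcubic, hlow⟩
    obtain ⟨hquad, hlin, hconst⟩ := (forall_quadratic_add_linear_add_const_eq_zero_iff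
      ((4 : K) • q₂ + (2 * (c₀ - q₀)) • N) ((2 : K) • (l₁ - q₁)) (q₀ - l₀ + c₀)).mp
        (by simpa using hlow)
    have hl₀ : l₀ = 0 := two_cancel (by linear_combination hlead - hconst)
    have hc₀ : c₀ = -q₀ := by linear_combination hlead - hl₀
    have hdiff (x : E) : l₁ x - q₁ x = 0 := two_cancel (by simpa using DFunLike.congr_fun hlin x)
    have hq₁ (x : E) : q₁ x = 0 := two_cancel (by
      linear_combination two_cancel (hcubic x) - hdiff x)
    have hl₁ (x : E) : l₁ x = 0 := by linear_combination hdiff x + hq₁ x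
    have hq₂ (x : E) : q₂ x = q₀ * N x := by
      have hx : 4 * q₂ x + 2 * (c₀ - q₀) * N x = 0 := by simpa using DFunLike.congr_fun hquad x
      refine sub_eq_zero.mp (two_cancel (two_cancel ?_))
      linear_combination hx - 2 * N x * hc₀
    exact ⟨QuadraticMap.ext hq₂, LinearMap.ext hq₁, LinearMap.ext hl₁, hl₀, hc₀⟩
  · rintro ⟨rfl, rfl, rfl, rfl, rfl⟩
    refine ⟨by ring, by simp, fun x => ?_⟩
    simp only [smul_apply, smul_eq_mul, LinearMap.zero_apply]
    ring

end GradedParts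

section Stereographic

variable {K E : Type*} [Field K] [AddCommGroup E] [Module K E]

/-- Inverse stereographic projection from the pole `(0, 1)` of the unit sphere `N u + t ^ 2 = 1` in
`E × K`, where the quadratic form `N` plays the role of `|·|²`. It is meaningful at the points `x`
with `N x + 1 ≠ 0`. -/
def prodInvStereo (N : QuadraticForm K E) (x : E) : E × K :=
  ((2 / (N x + 1)) • x, (N x - 1) / (N x + 1))

theorem sq_mul_prodQuadric_div (q₂ : QuadraticForm K E) (q₁ l₁ : Module.Dual K E) (q₀ l₀ c₀ : K)
    (x : E) (a b : K) {d : K} (hd : d ≠ 0) :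
    d ^ 2 * prodQuadric q₂ q₁ l₁ q₀ l₀ c₀ ((a / d) • x, b / d) =
      a ^ 2 * q₂ x + a * b * q₁ x + q₀ * b ^ 2 + d * (a * l₁ x + l₀ * b) + c₀ * d ^ 2 := by
  simp only [prodQuadric, QuadraticMap.map_smul, map_smul, smul_eq_mul]
  field_simp
  ring

theorem quadric_section_is_darboux_cyclide_general [NeZero (2 : K)]
    (N q₂ : QuadraticForm K E) (q₁ l₁ : Module.Dual K E) (q₀ l₀ c₀ : K) :
    (∀ x, N x + 1 ≠ 0 →
      (N x + 1) ^ 2 * prodQuadric q₂ q₁ l₁ q₀ l₀ c₀ (prodInvStereo N x) =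
        (q₀ + l₀ + c₀) * N x ^ 2 + 2 * N x * (q₁ x + l₁ x) + 4 * q₂ x
          + 2 * (c₀ - q₀) * N x + 2 * (l₁ x - q₁ x) + (q₀ - l₀ + c₀)) ∧
    ((q₀ + l₀ + c₀ = 0 ∧ (∀ x, 2 * (q₁ x + l₁ x) = 0) ∧
      ∀ x, 4 * q₂ x + 2 * (c₀ - q₀) * N x + 2 * (l₁ x - q₁ x) + (q₀ - l₀ + c₀) = 0) ↔
      ∃ μ, ∀ p, prodQuadric q₂ q₁ l₁ q₀ l₀ c₀ p = μ * (N p.1 + p.2 ^ 2 - 1)) := by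
  refine ⟨fun x hx => ?_, ?_⟩
  · rw [prodInvStereo, sq_mul_prodQuadric_div _ _ _ _ _ _ _ _ _ hx]
    ring
  · simp only [cyclide_coefficients_eq_zero_iff, forall_prodQuadric_eq_mul_iff]
    constructor
    · rintro ⟨hq₂, hq₁, hl₁, hl₀, hc₀⟩
      exact ⟨q₀, hq₂, hq₁, hl₁, rfl, hl₀, hc₀⟩
    · rintro ⟨_, hq₂, hq₁, hl₁, rfl, hl₀, hc₀⟩
      exact ⟨hq₂, hq₁, hl₁, hl₀, hc₀⟩

end Stereographic

section Coordinates

theorem forall_init_last_iff {α : Type*} {n : ℕ} {P : (Fin n → α) × α → Prop} :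
    (∀ u : Fin (n + 1) → α, P (Fin.init u, u (Fin.last n))) ↔ ∀ p, P p := by
  refine ⟨fun h p => ?_, fun h u => h _⟩
  simpa using h (Fin.snoc p.1 p.2)

theorem init_fin_four {α : Type*} (u : Fin 4 → α) : Fin.init u = ![u 0, u 1, u 2] := by
  ext i
  fin_cases i <;> rfl

theorem sumSquares_fin_three {K : Type*} [CommRing K] (x : Fin 3 → K) :
    QuadraticMap.weightedSumSquares K (1 : Fin 3 → K) x = x 0 ^ 2 + x 1 ^ 2 + x 2 ^ 2 := by
  simp [Fin.sum_univ_three, sq]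

theorem prodInvStereo_sumSquares (x : Fin 3 → ℝ) :
    prodInvStereo (QuadraticMap.weightedSumSquares ℝ (1 : Fin 3 → ℝ)) x =
      (Fin.init (invStereo x), invStereo x (Fin.last 3)) := by
  rw [prodInvStereo, sumSquares_fin_three, init_fin_four]
  refine Prod.ext (funext fun i => ?_) rfl
  fin_cases i <;> simp [invStereo, div_mul_eq_mul_div]

end Coordinates

/-- the stereographic projection of the intersection of `Σ` with any quadric
`G = 0` of `ℝ⁴` satisfies an equation of Darboux cyclide form; the cyclide equation is
trivial (all coefficients vanish) iff `G` is a scalar multiple of the polynomial defining `Σ`.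
Here `q₂` is a quadratic form on `ℝ³` (given by a matrix `M`) and `q₁`, `l₁` are linear forms
(given by coefficient vectors). -/
theorem quadric_section_is_darboux_cyclide
    (M : Matrix (Fin 3) (Fin 3) ℝ) (q2 : (Fin 3 → ℝ) → ℝ)
    (hq2 : ∀ y : Fin 3 → ℝ, q2 y = ∑ i : Fin 3, ∑ j : Fin 3, M i j * y i * y j)
    (q1 l1 : Fin 3 → ℝ) (q0 l0 c0 : ℝ)
    (G : (Fin 4 → ℝ) → ℝ)
    (hG : ∀ u : Fin 4 → ℝ,
      G u = q2 ![u 0, u 1, u 2]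
        + (q1 0 * u 0 + q1 1 * u 1 + q1 2 * u 2) * u 3
        + q0 * u 3 ^ 2
        + (l1 0 * u 0 + l1 1 * u 1 + l1 2 * u 2)
        + l0 * u 3 + c0) :
    (∀ x : Fin 3 → ℝ,
      (x 0 ^ 2 + x 1 ^ 2 + x 2 ^ 2 + 1) ^ 2 * G (invStereo x)
        = (q0 + l0 + c0) * (x 0 ^ 2 + x 1 ^ 2 + x 2 ^ 2) ^ 2
          + 2 * (x 0 ^ 2 + x 1 ^ 2 + x 2 ^ 2)
              * ((q1 0 * x 0 + q1 1 * x 1 + q1 2 * x 2)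
                  + (l1 0 * x 0 + l1 1 * x 1 + l1 2 * x 2))
          + 4 * q2 x
          + 2 * (c0 - q0) * (x 0 ^ 2 + x 1 ^ 2 + x 2 ^ 2)
          + 2 * ((l1 0 * x 0 + l1 1 * x 1 + l1 2 * x 2)
                  - (q1 0 * x 0 + q1 1 * x 1 + q1 2 * x 2))
          + (q0 - l0 + c0)) ∧
    ((q0 + l0 + c0 = 0 ∧
      (∀ x : Fin 3 → ℝ,
        2 * ((q1 0 * x 0 + q1 1 * x 1 + q1 2 * x 2)
              + (l1 0 * x 0 + l1 1 * x 1 + l1 2 * x 2)) = 0) ∧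
      (∀ x : Fin 3 → ℝ,
        4 * q2 x + 2 * (c0 - q0) * (x 0 ^ 2 + x 1 ^ 2 + x 2 ^ 2)
          + 2 * ((l1 0 * x 0 + l1 1 * x 1 + l1 2 * x 2)
                  - (q1 0 * x 0 + q1 1 * x 1 + q1 2 * x 2))
          + (q0 - l0 + c0) = 0))
      ↔ ∃ μ : ℝ, ∀ u : Fin 4 → ℝ,
          G u = μ * (u 0 ^ 2 + u 1 ^ 2 + u 2 ^ 2 + u 3 ^ 2 - 1)) := by
  obtain ⟨Q, rfl⟩ : ∃ Q : QuadraticForm ℝ (Fin 3 → ℝ), ⇑Q = q2 :=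
    ⟨∑ i, ∑ j, M i j • QuadraticMap.proj i j, funext fun y => by
      simp [hq2, mul_assoc]⟩
  have dual_apply (v x : Fin 3 → ℝ) :
      dotProductEquiv ℝ (Fin 3) v x = v 0 * x 0 + v 1 * x 1 + v 2 * x 2 := by
    simp [dotProduct, Fin.sum_univ_three]
  have hG' (u : Fin 4 → ℝ) : G u =
      prodQuadric Q (dotProductEquiv ℝ _ q1) (dotProductEquiv ℝ _ l1) q0 l0 c0
        (Fin.init u, u (Fin.last 3)) := by
    rw [hG, prodQuadric, dual_apply, dual_apply, init_fin_four]
    rfl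
  obtain ⟨identity, trivial_iff⟩ := quadric_section_is_darboux_cyclide_general
    (QuadraticMap.weightedSumSquares ℝ (1 : Fin 3 → ℝ)) Q
    (dotProductEquiv ℝ _ q1) (dotProductEquiv ℝ _ l1) q0 l0 c0
  simp only [prodInvStereo_sumSquares, ← hG', ← forall_init_last_iff, sumSquares_fin_three,
    dual_apply] at identity trivial_iff
  exact ⟨fun x => identity x (by positivity), trivial_iff⟩
end

section
/- Let A be a real symmetric 5×5 matrix, J = diag(1,1,1,1,−1), and suppose the set of real roots of det(A − tJ) = 0 is nonempty. If t₀ is the smallest real root, then the symmetric matrix A − t₀J has at most one negative eigenvalue (counted with multiplicity); if t₁ is the largest real root, then A − t₁J has at most one positive eigenvalue (counted with multiplicity). In particular, neither A − t₀J nor A − t₁J can have exactly two positive and two negative eigenvalues. -/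
/-!
For a real quadratic form `Q` let `sigPos Q` and `sigNeg Q` be the largest dimensions of subspaces
on which `Q` is positive, respectively negative, definite. Both are lower semicontinuous in `Q`, and
they add up to the dimension of the space when `Q` is nondegenerate, so they are constant along a
connected family of nondegenerate forms. For `t → -∞` a positive multiple of `Q - t • P` tends to
`P`, which gives `sigPos P ≤ sigPos (Q - t • P)`. If the pencil is nondegenerate for all `t < t₀`,
then `sigNeg (Q - t • P)` is constant there, hence at most the dimension minus `sigPos P`, and by
semicontinuity this bound persists at `t₀`. The largest root is the smallest root of the pencil
spanned by `-Q` and `P`. For `J` the bound is `5 - 4 = 1`.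
-/

open Matrix

/-- The matrix `J = diag(1,1,1,1,−1)`. -/
noncomputable def Jmat : Matrix (Fin 5) (Fin 5) ℝ :=
  Matrix.diagonal ![1, 1, 1, 1, -1]

lemma Jmat_isHermitian : Jmat.IsHermitian := Matrix.isHermitian_diagonal _

lemma smul_Jmat_isHermitian (t : ℝ) : (t • Jmat).IsHermitian := by
  rw [Matrix.IsHermitian, Matrix.conjTranspose_smul, star_trivial]
  rw [Jmat_isHermitian]

/-- The matrices `A − tJ` of the pencil are Hermitian (i.e. real symmetric). -/
noncomputable def pencilHerm (A : Matrix (Fin 5) (Fin 5) ℝ) (hA : A.IsHermitian) (t : ℝ) :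
    (A - t • Jmat).IsHermitian :=
  hA.sub (smul_Jmat_isHermitian t)

/-- The number of positive eigenvalues (with multiplicity) of a real symmetric matrix. -/
noncomputable def posCount {M : Matrix (Fin 5) (Fin 5) ℝ} (hM : M.IsHermitian) : ℕ :=
  (Finset.univ.filter fun i => 0 < hM.eigenvalues i).card

/-- The number of negative eigenvalues (with multiplicity) of a real symmetric matrix. -/
noncomputable def negCount {M : Matrix (Fin 5) (Fin 5) ℝ} (hM : M.IsHermitian) : ℕ :=
  (Finset.univ.filter fun i => hM.eigenvalues i < 0).card

open Filter Topology QuadraticMap QuadraticForm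
open scoped Finset

lemma toQuadraticForm'_apply {n R : Type*} [Fintype n] [DecidableEq n] [CommRing R]
    (M : Matrix n n R) (x : n → R) : M.toQuadraticForm' x = x ⬝ᵥ M *ᵥ x := by
  simp [toQuadraticForm', toLinearMap₂'_apply']

lemma nondegenerate_neg {R V N : Type*} [CommRing R] [AddCommGroup V] [Module R V]
    [AddCommGroup N] [Module R N] {Q : QuadraticMap R V N} (hQ : Q.Nondegenerate) :
    (-Q).Nondegenerate := by
  have hpolar : (-Q).polarBilin = -Q.polarBilin := by
    ext x y
    simp [polar_neg]
  have hradical : (-Q).radical = Q.radical := by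
    ext x
    simp [mem_radical_iff']
  refine ⟨hradical.trans hQ.radical_eq_bot, ?_⟩
  rw [hpolar, LinearMap.ker_neg]
  exact hQ.rank_rad_polar_le

section OrderedField

variable {𝕜 V : Type*} [Field 𝕜] [LinearOrder 𝕜] [IsStrictOrderedRing 𝕜] [AddCommGroup V]
  [Module 𝕜 V] [FiniteDimensional 𝕜 V]

lemma sigPos_le_sigPos_smul (Q : QuadraticForm 𝕜 V) {c : 𝕜} (hc : 0 < c) :
    sigPos Q ≤ sigPos (c • Q) := by
  obtain ⟨W, hW, hpos⟩ := exists_finrank_eq_sigPos_and_posDef Q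
  exact hW ▸ le_sigPos_of_posDef (c • Q) (hpos.smul hc)

lemma sigPos_add_sigNeg_eq_finrank {Q : QuadraticForm 𝕜 V} (hQ : Q.Nondegenerate) :
    sigPos Q + sigNeg Q = Module.finrank 𝕜 V := by
  rw [← sigPos_add_sigNeg_add_radical (Q := Q), hQ.radical_eq_bot, finrank_bot, add_zero]

end OrderedField

section Semicontinuity

variable {n T V : Type*} [AddCommGroup V] [Module ℝ V]

lemma isOpen_setOf_posDef_toQuadraticForm' [Fintype n] [DecidableEq n] :
    IsOpen {M : Matrix n n ℝ | M.toQuadraticForm'.PosDef} := by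
  refine isOpen_iff_eventually.2 fun M₀ (hM₀ : M₀.toQuadraticForm'.PosDef) => ?_
  have pos_on_sphere : ∀ᶠ M in 𝓝 M₀, ∀ x ∈ Metric.sphere (0 : n → ℝ) 1, 0 < x ⬝ᵥ M *ᵥ x := by
    refine (isCompact_sphere 0 1).eventually_forall_of_forall_eventually fun x hx => ?_
    have hcont : Continuous fun p : Matrix n n ℝ × (n → ℝ) => p.2 ⬝ᵥ p.1 *ᵥ p.2 := by fun_prop
    refine hcont.continuousAt.eventually (lt_mem_nhds ?_)
    simpa only [toQuadraticForm'_apply] using hM₀ x (Metric.ne_of_mem_sphere hx one_ne_zero)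
  filter_upwards [pos_on_sphere] with M hM x hx
  have hnorm : 0 < ‖x‖ := norm_pos_iff.2 hx
  have hunit := hM (‖x‖⁻¹ • x) (by simp [norm_smul, hnorm.ne'])
  have hscale : ‖x‖⁻¹ • x ⬝ᵥ M *ᵥ (‖x‖⁻¹ • x) = ‖x‖⁻¹ * ‖x‖⁻¹ * (x ⬝ᵥ M *ᵥ x) := by
    simp [mulVec_smul, mul_assoc]
  rw [hscale] at hunit
  exact toQuadraticForm'_apply M x ▸ pos_of_mul_pos_right hunit (by positivity)

variable [FiniteDimensional ℝ V]

lemma eventually_posDef_of_tendsto {l : Filter T} {Q : T → QuadraticForm ℝ V}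
    {Q₀ : QuadraticForm ℝ V} (hQ : ∀ x, Tendsto (fun t => Q t x) l (𝓝 (Q₀ x)))
    (hQ₀ : Q₀.PosDef) : ∀ᶠ t in l, (Q t).PosDef := by
  let b := Module.finBasis ℝ V
  have hgram : Tendsto (fun t => (Q t).toMatrix b) l (𝓝 (Q₀.toMatrix b)) := by
    refine tendsto_pi_nhds.2 fun i => tendsto_pi_nhds.2 fun j => ?_
    simp only [QuadraticForm.toMatrix, LinearMap.toMatrix₂_apply, associated_apply]
    exact (((hQ _).sub (hQ _)).sub (hQ _)).const_smul _
  have posDef_gram_iff (R : QuadraticForm ℝ V) :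
      (R.toMatrix b).toQuadraticForm'.PosDef ↔ R.PosDef := by
    have happly (y : Fin (Module.finrank ℝ V) → ℝ) :
        (R.toMatrix b).toQuadraticForm' y = R (b.equivFun.symm y) := by
      rw [toQuadraticForm'_apply, ← associated_eq_self_apply ℝ R]
      exact LinearMap.BilinForm.dotProduct_toMatrix_mulVec b R.associated y y
    simp only [QuadraticMap.PosDef, happly, ne_eq]
    simp [b.equivFun.symm.toEquiv.forall_congr_left]
  filter_upwards [hgram (isOpen_setOf_posDef_toQuadraticForm'.mem_nhds
    ((posDef_gram_iff Q₀).2 hQ₀))] with t ht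
  exact (posDef_gram_iff (Q t)).1 ht

lemma eventually_sigPos_le_of_tendsto {l : Filter T} {Q : T → QuadraticForm ℝ V}
    {Q₀ : QuadraticForm ℝ V} (hQ : ∀ x, Tendsto (fun t => Q t x) l (𝓝 (Q₀ x))) :
    ∀ᶠ t in l, sigPos Q₀ ≤ sigPos (Q t) := by
  obtain ⟨W, hW, hpos⟩ := exists_finrank_eq_sigPos_and_posDef Q₀
  have hrestrict : ∀ᶠ t in l, ((Q t).restrict W).PosDef :=
    eventually_posDef_of_tendsto (Q₀ := Q₀.restrict W) (fun x => hQ x) hpos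
  filter_upwards [hrestrict] with t ht
  exact hW ▸ le_sigPos_of_posDef (Q t) ht

lemma eventually_sigNeg_le_of_tendsto {l : Filter T} {Q : T → QuadraticForm ℝ V}
    {Q₀ : QuadraticForm ℝ V} (hQ : ∀ x, Tendsto (fun t => Q t x) l (𝓝 (Q₀ x))) :
    ∀ᶠ t in l, sigNeg Q₀ ≤ sigNeg (Q t) :=
  eventually_sigPos_le_of_tendsto fun x => (hQ x).neg

lemma sigNeg_eq_of_isPreconnected [TopologicalSpace T] {S : Set T} (hS : IsPreconnected S)
    {Q : T → QuadraticForm ℝ V} (hcont : ∀ x, ContinuousOn (fun t => Q t x) S)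
    (hQ : ∀ t ∈ S, (Q t).Nondegenerate) {s t : T} (hs : s ∈ S) (ht : t ∈ S) :
    sigNeg (Q s) = sigNeg (Q t) := by
  refine hS.constant (f := fun t => sigNeg (Q t)) (fun u hu => ?_) hs ht
  have hconst : ∀ᶠ v in 𝓝[S] u, sigNeg (Q v) = sigNeg (Q u) := by
    filter_upwards [eventually_sigPos_le_of_tendsto fun x => hcont x u hu,
      eventually_sigNeg_le_of_tendsto fun x => hcont x u hu, self_mem_nhdsWithin]
      with v hpos hneg hv
    have := sigPos_add_sigNeg_eq_finrank (hQ u hu)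
    have := sigPos_add_sigNeg_eq_finrank (hQ v hv)
    omega
  exact continuousWithinAt_const.congr_of_eventuallyEq hconst rfl

end Semicontinuity

section Pencil

variable {V : Type*} [AddCommGroup V] [Module ℝ V] [FiniteDimensional ℝ V]

lemma eventually_atBot_sigPos_le_sigPos_sub_smul (Q P : QuadraticForm ℝ V) :
    ∀ᶠ t : ℝ in atBot, sigPos P ≤ sigPos (Q - t • P) := by
  have hlim (x : V) :
      Tendsto (fun t : ℝ => ((-t)⁻¹ • (Q - t • P)) x) atBot (𝓝 (P x)) := by
    have hzero : Tendsto (fun t : ℝ => (-t)⁻¹ * Q x + P x) atBot (𝓝 (P x)) := by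
      simpa using ((tendsto_inv_atTop_zero.comp tendsto_neg_atBot_atTop).mul_const
        (Q x)).add_const (P x)
    refine hzero.congr' ?_
    filter_upwards [eventually_lt_atBot 0] with t ht
    simp only [_root_.smul_apply, _root_.sub_apply, smul_eq_mul]
    field_simp [ht.ne]
    ring
  filter_upwards [eventually_sigPos_le_of_tendsto hlim, eventually_lt_atBot 0] with t hle ht
  calc sigPos P ≤ sigPos ((-t)⁻¹ • (Q - t • P)) := hle
    _ ≤ sigPos (-t • (-t)⁻¹ • (Q - t • P)) := sigPos_le_sigPos_smul _ (neg_pos.2 ht)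
    _ = sigPos (Q - t • P) := by rw [smul_inv_smul₀ (neg_ne_zero.2 ht.ne)]

theorem sigNeg_sub_smul_add_sigPos_le {Q P : QuadraticForm ℝ V} {t₀ : ℝ}
    (h : ∀ t < t₀, (Q - t • P).Nondegenerate) :
    sigNeg (Q - t₀ • P) + sigPos P ≤ Module.finrank ℝ V := by
  have hcont (x : V) : Continuous fun t : ℝ => (Q - t • P) x := by
    simp only [_root_.sub_apply, _root_.smul_apply]
    fun_prop
  have hnear : ∀ᶠ s in 𝓝[<] t₀, sigNeg (Q - t₀ • P) ≤ sigNeg (Q - s • P) :=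
    eventually_sigNeg_le_of_tendsto fun x => (hcont x).continuousWithinAt
  obtain ⟨s, hs, hst : s < t₀⟩ := (hnear.and self_mem_nhdsWithin).exists
  obtain ⟨r, hr, hrt⟩ :=
    ((eventually_atBot_sigPos_le_sigPos_sub_smul Q P).and (eventually_lt_atBot t₀)).exists
  have hconst : sigNeg (Q - s • P) = sigNeg (Q - r • P) :=
    sigNeg_eq_of_isPreconnected isPreconnected_Iio (Q := fun t => Q - t • P)
      (fun x => (hcont x).continuousOn) h hst hrt
  calc sigNeg (Q - t₀ • P) + sigPos P ≤ sigNeg (Q - r • P) + sigPos (Q - r • P) :=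
        add_le_add (hs.trans_eq hconst) hr
    _ = Module.finrank ℝ V := by rw [add_comm, sigPos_add_sigNeg_eq_finrank (h r hrt)]

theorem sigPos_sub_smul_add_sigPos_le {Q P : QuadraticForm ℝ V} {t₁ : ℝ}
    (h : ∀ t > t₁, (Q - t • P).Nondegenerate) :
    sigPos (Q - t₁ • P) + sigPos P ≤ Module.finrank ℝ V := by
  have hneg (t : ℝ) : -Q - t • P = -(Q - -t • P) := by module
  have hpencil : ∀ t < -t₁, (-Q - t • P).Nondegenerate := fun t ht => by
    rw [hneg]
    exact nondegenerate_neg (h (-t) (lt_neg.1 ht))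
  have hle := sigNeg_sub_smul_add_sigPos_le hpencil
  rwa [hneg, neg_neg, sigNeg_neg] at hle

end Pencil

section Eigenvalues

variable {n : Type*} [Fintype n] [DecidableEq n] {M : Matrix n n ℝ}

lemma equivalent_weightedSumSquares_eigenvalues (hM : M.IsHermitian) :
    M.toQuadraticForm'.Equivalent (weightedSumSquares ℝ hM.eigenvalues) := by
  let U : Matrix n n ℝ := hM.eigenvectorUnitary
  have hspec : M = U * diagonal hM.eigenvalues * Uᵀ := by
    simpa [U, Unitary.conjStarAlgAut_apply, star_eq_conjTranspose, Function.comp_def]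
      using hM.spectral_theorem
  refine ⟨⟨UnitaryGroup.toLinearEquiv (star hM.eigenvectorUnitary), fun x => ?_⟩⟩
  calc weightedSumSquares ℝ hM.eigenvalues (Uᵀ *ᵥ x)
      = Uᵀ *ᵥ x ⬝ᵥ diagonal hM.eigenvalues *ᵥ Uᵀ *ᵥ x := by
        simp only [weightedSumSquares_apply, dotProduct, mulVec_diagonal, smul_eq_mul,
          mul_left_comm]
    _ = x ⬝ᵥ (U * diagonal hM.eigenvalues * Uᵀ) *ᵥ x := by
        simp only [← mulVec_mulVec, dotProduct_mulVec x, mulVec_transpose]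
    _ = M.toQuadraticForm' x := by rw [← hspec, toQuadraticForm'_apply]

lemma card_pos_eigenvalues_eq_sigPos (hM : M.IsHermitian) :
    #{i | 0 < hM.eigenvalues i} = sigPos M.toQuadraticForm' := by
  rw [sigPos_of_equiv_weightedSumSquares (equivalent_weightedSumSquares_eigenvalues hM),
    Set.ncard_eq_toFinset_card', Set.toFinset_ofPred]

lemma card_neg_eigenvalues_eq_sigNeg (hM : M.IsHermitian) :
    #{i | hM.eigenvalues i < 0} = sigNeg M.toQuadraticForm' := by
  rw [sigNeg_of_equiv_weightedSumSquares (equivalent_weightedSumSquares_eigenvalues hM),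
    Set.ncard_eq_toFinset_card', Set.toFinset_ofPred]

lemma nondegenerate_toQuadraticForm' (hM : M.IsHermitian) (hdet : M.det ≠ 0) :
    M.toQuadraticForm'.Nondegenerate := by
  have hne (i : n) : hM.eigenvalues i ≠ 0 := by
    have hprod : ∏ i, hM.eigenvalues i ≠ 0 := by simpa [hM.det_eq_prod_eigenvalues] using hdet
    exact Finset.prod_ne_zero_iff.1 hprod i (Finset.mem_univ i)
  rw [nondegenerate_iff_radical_eq_bot, ← Submodule.finrank_eq_zero,
    finrank_radical_of_equiv_weightedSumSquares (equivalent_weightedSumSquares_eigenvalues hM)]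
  simp [hne]

end Eigenvalues

lemma card_pos_eigenvalues_Jmat : #{i | 0 < Jmat_isHermitian.eigenvalues i} = 4 := by
  have hJ : Jmat.toQuadraticForm' = weightedSumSquares ℝ (![1, 1, 1, 1, -1] : Fin 5 → ℝ) := by
    ext x
    simp [toQuadraticForm'_apply, Jmat, dotProduct, mulVec_diagonal, Fin.sum_univ_five]
  rw [card_pos_eigenvalues_eq_sigPos, hJ, sigPos_weightedSumSquares, Set.ncard_eq_toFinset_card',
    Set.toFinset_ofPred]
  rw [Finset.card_filter, Fin.sum_univ_five]
  simp

theorem extreme_roots_signature_general {n : Type*} [Fintype n] [DecidableEq n]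
    {A B : Matrix n n ℝ} (hA : A.IsHermitian) (hB : B.IsHermitian) {t₀ t₁ : ℝ}
    (ht₀ : ∀ t : ℝ, (A - t • B).det = 0 → t₀ ≤ t)
    (ht₁ : ∀ t : ℝ, (A - t • B).det = 0 → t ≤ t₁) :
    #{i | (hA.sub (hB.smul (.all t₀))).eigenvalues i < 0} + #{i | 0 < hB.eigenvalues i} ≤
      Fintype.card n ∧
    #{i | 0 < (hA.sub (hB.smul (.all t₁))).eigenvalues i} + #{i | 0 < hB.eigenvalues i} ≤
      Fintype.card n := by
  have hpencil (t : ℝ) :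
      (A - t • B).toQuadraticForm' = A.toQuadraticForm' - t • B.toQuadraticForm' := by
    ext x
    simp [toQuadraticForm'_apply, sub_mulVec, smul_mulVec]
  have hnondeg {t : ℝ} (ht : (A - t • B).det ≠ 0) :
      (A.toQuadraticForm' - t • B.toQuadraticForm').Nondegenerate :=
    hpencil t ▸ nondegenerate_toQuadraticForm' (hA.sub (hB.smul (.all t))) ht
  simp only [card_neg_eigenvalues_eq_sigNeg, card_pos_eigenvalues_eq_sigPos, hpencil,
    ← Module.finrank_fintype_fun_eq_card ℝ (η := n)]
  exact ⟨sigNeg_sub_smul_add_sigPos_le fun t ht => hnondeg fun h0 => (ht₀ t h0).not_gt ht,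
    sigPos_sub_smul_add_sigPos_le fun t ht => hnondeg fun h0 => (ht₁ t h0).not_gt ht⟩

/-- for the smallest real root `t₀` of `det(A − tJ) = 0` the matrix `A − t₀J`
has at most one negative eigenvalue, and for the largest real root `t₁` the matrix `A − t₁J`
has at most one positive eigenvalue; in particular neither has signature `(0,+,+,−,−)`. -/
theorem extreme_roots_signature
    (A : Matrix (Fin 5) (Fin 5) ℝ) (hA : A.IsHermitian) (t₀ t₁ : ℝ)
    (h₀ : (A - t₀ • Jmat).det = 0) (h₀min : ∀ t : ℝ, (A - t • Jmat).det = 0 → t₀ ≤ t)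
    (h₁ : (A - t₁ • Jmat).det = 0) (h₁max : ∀ t : ℝ, (A - t • Jmat).det = 0 → t ≤ t₁) :
    negCount (pencilHerm A hA t₀) ≤ 1 ∧
    posCount (pencilHerm A hA t₁) ≤ 1 ∧
    ¬(posCount (pencilHerm A hA t₀) = 2 ∧ negCount (pencilHerm A hA t₀) = 2) ∧
    ¬(posCount (pencilHerm A hA t₁) = 2 ∧ negCount (pencilHerm A hA t₁) = 2) := by
  have h : negCount (pencilHerm A hA t₀) + 4 ≤ 5 ∧ posCount (pencilHerm A hA t₁) + 4 ≤ 5 :=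
    card_pos_eigenvalues_Jmat ▸ extreme_roots_signature_general hA Jmat_isHermitian h₀min h₁max
  omega
end

section
/- Let R > r > 0 and define γ : ℝ → ℝ³ by γ(t) = (√(R²−r²)·cos t, r + R·sin t, r·cos t). Then for every t: (i) γ(t) lies on the ring torus, i.e. (√(γ₁(t)² + γ₂(t)²) − R)² + γ₃(t)² = r² (indeed √(γ₁(t)²+γ₂(t)²) = R + r·sin t > 0); (ii) |γ(t) − (0, r, 0)| = R; and (iii) γ(t) lies in the plane r·x₁ = √(R²−r²)·x₃ through the origin. Hence γ traces a circle of radius R (a Villarceau circle) lying entirely on the torus. -/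
open Real

/-!
Since `√(R² − r²)`, `r` and `R` form a right triangle, the squared distance of `γ(t)` from the
`z`-axis is the perfect square `(R + r sin t)²`. The point therefore has meridian coordinates
`(R + r sin t, r cos t)`, which parametrize the generating circle of the torus.
-/

section PythagoreanIdentities

variable {A : Type*} [CommRing A] {q R r s c : A}

theorem villarceau_axis_dist_sq (hq : q ^ 2 + r ^ 2 = R ^ 2) (hsc : s ^ 2 + c ^ 2 = 1) :
    (q * c) ^ 2 + (r + R * s) ^ 2 = (R + r * s) ^ 2 := by
  linear_combination c ^ 2 * hq + (R ^ 2 - r ^ 2) * hsc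

theorem villarceau_center_dist_sq (hq : q ^ 2 + r ^ 2 = R ^ 2) (hsc : s ^ 2 + c ^ 2 = 1) :
    (q * c) ^ 2 + (R * s) ^ 2 + (r * c) ^ 2 = R ^ 2 := by
  linear_combination c ^ 2 * hq + R ^ 2 * hsc

theorem torus_meridian_eq (R r : A) (hsc : s ^ 2 + c ^ 2 = 1) :
    (R + r * s - R) ^ 2 + (r * c) ^ 2 = r ^ 2 := by
  linear_combination r ^ 2 * hsc

end PythagoreanIdentities

theorem add_mul_pos_of_abs_lt_of_abs_le_one {A : Type*} [CommRing A] [LinearOrder A]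
    [IsStrictOrderedRing A] {R r s : A} (hr : |r| < R) (hs : |s| ≤ 1) : 0 < R + r * s := by
  have habs : |r * s| < R := calc
    |r * s| = |r| * |s| := abs_mul r s
    _ ≤ |r| := mul_le_of_le_one_right (abs_nonneg r) hs
    _ < R := hr
  linarith [neg_lt_of_abs_lt habs]

theorem sq_sqrt_sq_sub_sq_add_sq {R r : ℝ} (h : |r| ≤ |R|) :
    √(R ^ 2 - r ^ 2) ^ 2 + r ^ 2 = R ^ 2 := by
  rw [sq_sqrt (sub_nonneg.mpr (sq_le_sq.mpr h)), sub_add_cancel]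

/-- the curve
`γ(t) = (√(R²−r²)·cos t, r + R·sin t, r·cos t)` lies on the ring torus with major radius `R`
and minor radius `r`, has constant distance `R` from the point `(0,r,0)`, and lies in the
plane `r·x₁ = √(R²−r²)·x₃`; hence it is a circle of radius `R` (a Villarceau circle) lying
entirely on the torus. -/
theorem villarceau_circle_on_torus (R r : ℝ) (hr : 0 < r) (hR : r < R) (t : ℝ) :
    Real.sqrt ((Real.sqrt (R ^ 2 - r ^ 2) * Real.cos t) ^ 2 + (r + R * Real.sin t) ^ 2)
        = R + r * Real.sin t ∧
    0 < R + r * Real.sin t ∧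
    (Real.sqrt ((Real.sqrt (R ^ 2 - r ^ 2) * Real.cos t) ^ 2 + (r + R * Real.sin t) ^ 2) - R) ^ 2
        + (r * Real.cos t) ^ 2 = r ^ 2 ∧
    Real.sqrt ((Real.sqrt (R ^ 2 - r ^ 2) * Real.cos t - 0) ^ 2
        + ((r + R * Real.sin t) - r) ^ 2 + (r * Real.cos t - 0) ^ 2) = R ∧
    r * (Real.sqrt (R ^ 2 - r ^ 2) * Real.cos t) = Real.sqrt (R ^ 2 - r ^ 2) * (r * Real.cos t) := by
  have hr_abs : |r| < R := (abs_of_pos hr).trans_lt hR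
  have hq := sq_sqrt_sq_sub_sq_add_sq (hr_abs.le.trans (le_abs_self R))
  have hsc := sin_sq_add_cos_sq t
  have hpos := add_mul_pos_of_abs_lt_of_abs_le_one hr_abs (abs_sin_le_one t)
  have haxis : √((√(R ^ 2 - r ^ 2) * cos t) ^ 2 + (r + R * sin t) ^ 2) = R + r * sin t := by
    rw [villarceau_axis_dist_sq hq hsc, sqrt_sq hpos.le]
  refine ⟨haxis, hpos, ?torus, ?center, mul_left_comm _ _ _⟩
  case torus => rw [haxis, torus_meridian_eq R r hsc]
  case center =>
    rw [sub_zero, sub_zero, add_sub_cancel_left, villarceau_center_dist_sq hq hsc,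
      sqrt_sq (hr.trans hR).le]
end

section
/- Let R > r > 0 and γ(t) = (√(R²−r²)·cos t, r + R·sin t, r·cos t) be a Villarceau circle of the ring torus (√(x²+y²)−R)² + z² = r². For a point p = (p₁,p₂,p₃) let τ(p) = (−p₂, p₁, 0) be the tangent direction of the parallel circle (rotational path about the z-axis) through p. Then for every t: |γ′(t)| = R, |τ(γ(t))| = R + r·sin t, and γ′(t)·τ(γ(t)) = √(R²−r²)·(R + r·sin t). Consequently the cosine of the angle between the Villarceau circle and the parallel circle at γ(t) equals √(R²−r²)/R, independent of t: the Villarceau circles intersect the circular paths of the rotation under a constant angle. -/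
/-!
A Villarceau circle has constant speed `R`, and along it the rotation field has norm
`R + r sin t`, the distance to the axis. The inner product of the velocity with the rotation field
is proportional to the same distance, which therefore cancels from the cosine of the angle.
-/

open Real InnerProductGeometry

section Coordinates

variable (a b c a' b' c' : ℝ)

theorem norm_euclidean_fin_three : ‖!₂[a, b, c]‖ = √(a ^ 2 + b ^ 2 + c ^ 2) := by
  simp [EuclideanSpace.norm_eq, Fin.sum_univ_three]

theorem inner_euclidean_fin_three :
    inner ℝ !₂[a, b, c] !₂[a', b', c'] = a * a' + b * b' + c * c' := by
  simp [PiLp.inner_apply, Fin.sum_univ_three, mul_comm]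

end Coordinates

theorem hasDerivAt_piLp {𝕜 ι : Type*} {E : ι → Type*}
    [NontriviallyNormedField 𝕜] [Fintype ι] [∀ i, NormedAddCommGroup (E i)]
    [∀ i, NormedSpace 𝕜 (E i)] (p : ENNReal) [Fact (1 ≤ p)]
    {f : 𝕜 → PiLp p E} {f' : PiLp p E} {x : 𝕜} :
    HasDerivAt f f' x ↔ ∀ i, HasDerivAt (fun y => f y i) (f' i) x := by
  simp only [← hasDerivWithinAt_univ, hasDerivWithinAt_iff_hasFDerivWithinAt,
    hasFDerivWithinAt_piLp, ContinuousLinearMap.comp_toSpanSingleton, PiLp.proj_apply]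

theorem hasDerivAt_const_mul_cos (x t : ℝ) : HasDerivAt (fun s => x * cos s) (-x * sin t) t := by
  simpa only [mul_neg, neg_mul] using (hasDerivAt_cos t).const_mul x

theorem sq_sqrt_sq_sub_sq {x y : ℝ} (h : |y| ≤ x) : √(x ^ 2 - y ^ 2) ^ 2 = x ^ 2 - y ^ 2 :=
  sq_sqrt (sub_nonneg.2 (sq_le_sq.2 (h.trans (le_abs_self x))))

theorem neg_abs_le_mul_sin (x t : ℝ) : -|x| ≤ x * sin t := by
  refine neg_le_of_abs_le ?_
  rw [abs_mul]
  exact mul_le_of_le_one_right (abs_nonneg x) (abs_sin_le_one t)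

/-- The velocity field `τ` of the rotation of space about the `z`-axis with unit angular speed;
at a point off the axis it is tangent to the parallel circle through that point. -/
noncomputable def rotationField (p : EuclideanSpace ℝ (Fin 3)) : EuclideanSpace ℝ (Fin 3) :=
  !₂[-p 1, p 0, 0]

/-- The trigonometric parametrization `γ` of a Villarceau circle of the torus with major radius
`R` and minor radius `r` about the `z`-axis; the circle has radius `R` and centre `(0, r, 0)`. -/
noncomputable def villarceauCircle (R r t : ℝ) : EuclideanSpace ℝ (Fin 3) :=
  !₂[√(R ^ 2 - r ^ 2) * cos t, r + R * sin t, r * cos t]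

/-- The velocity `γ'` of `villarceauCircle`, given in coordinates to expose them to the norm and
inner product computations; see `hasDerivAt_villarceauCircle`. -/
noncomputable def villarceauVelocity (R r t : ℝ) : EuclideanSpace ℝ (Fin 3) :=
  !₂[-√(R ^ 2 - r ^ 2) * sin t, R * cos t, -r * sin t]

section Villarceau

variable (R r t : ℝ)

theorem hasDerivAt_villarceauCircle :
    HasDerivAt (villarceauCircle R r) (villarceauVelocity R r t) t := by
  rw [hasDerivAt_piLp]
  intro i
  fin_cases i
  · exact hasDerivAt_const_mul_cos √(R ^ 2 - r ^ 2) t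
  · exact ((hasDerivAt_sin t).const_mul R).const_add r
  · exact hasDerivAt_const_mul_cos r t

theorem inner_villarceauVelocity_rotationField :
    inner ℝ (villarceauVelocity R r t) (rotationField (villarceauCircle R r t)) =
      √(R ^ 2 - r ^ 2) * (R + r * sin t) :=
  calc
    _ = -√(R ^ 2 - r ^ 2) * sin t * -(r + R * sin t) + R * cos t * (√(R ^ 2 - r ^ 2) * cos t)
          + -r * sin t * 0 := inner_euclidean_fin_three ..
    _ = √(R ^ 2 - r ^ 2) * (R + r * sin t) := by
      linear_combination R * √(R ^ 2 - r ^ 2) * sin_sq_add_cos_sq t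

variable {R r}

theorem norm_villarceauVelocity (h : |r| ≤ R) : ‖villarceauVelocity R r t‖ = R := by
  have speed_sq : (-√(R ^ 2 - r ^ 2) * sin t) ^ 2 + (R * cos t) ^ 2 + (-r * sin t) ^ 2 =
      R ^ 2 := by
    linear_combination sin t ^ 2 * sq_sqrt_sq_sub_sq h + R ^ 2 * sin_sq_add_cos_sq t
  rw [villarceauVelocity, norm_euclidean_fin_three, speed_sq, sqrt_sq ((abs_nonneg r).trans h)]

theorem norm_rotationField_villarceauCircle (h : |r| ≤ R) :
    ‖rotationField (villarceauCircle R r t)‖ = R + r * sin t := by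
  have distance_nonneg : 0 ≤ R + r * sin t := by linarith [neg_abs_le_mul_sin r t]
  have distance_sq : (-(r + R * sin t)) ^ 2 + (√(R ^ 2 - r ^ 2) * cos t) ^ 2 + 0 ^ 2 =
      (R + r * sin t) ^ 2 := by
    linear_combination cos t ^ 2 * sq_sqrt_sq_sub_sq h + (R ^ 2 - r ^ 2) * sin_sq_add_cos_sq t
  calc
    _ = √((-(r + R * sin t)) ^ 2 + (√(R ^ 2 - r ^ 2) * cos t) ^ 2 + 0 ^ 2) :=
      norm_euclidean_fin_three ..
    _ = R + r * sin t := by rw [distance_sq, sqrt_sq distance_nonneg]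

theorem cos_angle_villarceauVelocity_rotationField (h : |r| < R) :
    cos (angle (villarceauVelocity R r t) (rotationField (villarceauCircle R r t))) =
      √(R ^ 2 - r ^ 2) / R := by
  have distance_pos : 0 < R + r * sin t := by linarith [neg_abs_le_mul_sin r t]
  rw [cos_angle, inner_villarceauVelocity_rotationField, norm_villarceauVelocity t h.le,
    norm_rotationField_villarceauCircle t h.le, mul_div_mul_right _ _ distance_pos.ne']

end Villarceau

/-- along the Villarceau circle
`γ(t) = (√(R²−r²)·cos t, r + R·sin t, r·cos t)` of the ring torus, with
`τ(p) = (−p₂, p₁, 0)` the tangent direction of the parallel circle through `p`, one has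
`|γ′(t)| = R`, `|τ(γ(t))| = R + r·sin t`, `γ′(t)·τ(γ(t)) = √(R²−r²)·(R + r·sin t)`, and
hence the cosine of the intersection angle is the constant `√(R²−r²)/R`. -/
theorem villarceau_constant_angle (R r : ℝ) (hr : 0 < r) (hR : r < R) (t : ℝ) :
    HasDerivAt (fun s => Real.sqrt (R ^ 2 - r ^ 2) * Real.cos s)
      (-(Real.sqrt (R ^ 2 - r ^ 2)) * Real.sin t) t ∧
    HasDerivAt (fun s => r + R * Real.sin s) (R * Real.cos t) t ∧
    HasDerivAt (fun s => r * Real.cos s) (-r * Real.sin t) t ∧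
    Real.sqrt ((-(Real.sqrt (R ^ 2 - r ^ 2)) * Real.sin t) ^ 2 + (R * Real.cos t) ^ 2
        + (-r * Real.sin t) ^ 2) = R ∧
    Real.sqrt ((-(r + R * Real.sin t)) ^ 2 + (Real.sqrt (R ^ 2 - r ^ 2) * Real.cos t) ^ 2
        + (0 : ℝ) ^ 2) = R + r * Real.sin t ∧
    (-(Real.sqrt (R ^ 2 - r ^ 2)) * Real.sin t) * (-(r + R * Real.sin t))
        + (R * Real.cos t) * (Real.sqrt (R ^ 2 - r ^ 2) * Real.cos t)
        + (-r * Real.sin t) * 0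
      = Real.sqrt (R ^ 2 - r ^ 2) * (R + r * Real.sin t) ∧
    ((-(Real.sqrt (R ^ 2 - r ^ 2)) * Real.sin t) * (-(r + R * Real.sin t))
        + (R * Real.cos t) * (Real.sqrt (R ^ 2 - r ^ 2) * Real.cos t)
        + (-r * Real.sin t) * 0)
      / (Real.sqrt ((-(Real.sqrt (R ^ 2 - r ^ 2)) * Real.sin t) ^ 2 + (R * Real.cos t) ^ 2
            + (-r * Real.sin t) ^ 2)
          * Real.sqrt ((-(r + R * Real.sin t)) ^ 2
            + (Real.sqrt (R ^ 2 - r ^ 2) * Real.cos t) ^ 2 + (0 : ℝ) ^ 2))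
      = Real.sqrt (R ^ 2 - r ^ 2) / R := by
  have abs_r_lt : |r| < R := by rwa [abs_of_pos hr]
  have velocity := hasDerivAt_villarceauCircle R r t
  have cosine := cos_angle_villarceauVelocity_rotationField t abs_r_lt
  rw [hasDerivAt_piLp] at velocity
  rw [cos_angle] at cosine
  simp only [← norm_euclidean_fin_three, ← inner_euclidean_fin_three]
  exact ⟨velocity 0, velocity 1, velocity 2,
    norm_villarceauVelocity t abs_r_lt.le,
    norm_rotationField_villarceauCircle t abs_r_lt.le,
    inner_villarceauVelocity_rotationField R r t,
    cosine⟩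
end
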